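/- Let g = 10. For b ranging over the integers with 2 ≤ b ≤ 12, the total number of solutions (b, ε₁, ε₂, d₁, d₂, l, m, n) of the equations (b+ε₁)·b^n + ε₂ = d₁·(10^l−1)/9 − d₂·(10^m−1)/9, with ε₁, ε₂ ∈ {1, −1}, integers 1 ≤ d₁, d₂ ≤ 9, l, m ≥ 1 and n ≥ 1, is exactly 160; in all of these solutions m ≤ l ≤ 4 and n ≤ 10. One instance is (2−1)·2^9 − 1 = 5·(10³−1)/9 − 4·(10²−1)/9. -/

import Mathlib

/-!
Write the equation as `9 * ((b + ε₁) * b ^ n + ε₂) + d₂ * (10 ^ m - 1) = d₁ * (10 ^ l - 1)`.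
Its left-hand side exceeds `10 ^ m - 1`, which forces `m ≤ l`. To bound `l`, choose for each `b` a
modulus modulo which the powers of `b` and of `10` have short periods, and which is divisible by
`1000`; as soon as `3 ≤ l`, the digit `d₁` can be read off modulo `1000`, and then a check of one
period of `n`, `m` and `l` shows that there is no solution with `5 ≤ l`, not even modulo this
number. Finally `l ≤ 4` bounds `b ^ n` by `10 ^ 4`, and as `d₁` is determined by the other
variables, the solutions are counted by testing a divisibility for each choice of those.
-/

/-- Membership predicate: `(b, ε₁, ε₂, d₁, d₂, l, m, n)` is a solution of
`(b + ε₁)·b^n + ε₂ = d₁·(10^l−1)/9 − d₂·(10^m−1)/9` with `2 ≤ b ≤ 12`,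
`ε₁, ε₂ ∈ {1, −1}`, `1 ≤ d₁, d₂ ≤ 9`, `l, m ≥ 1` and `n ≥ 1`. -/
def DiffSol10 (b ε₁ ε₂ d₁ d₂ : ℤ) (l m n : ℕ) : Prop :=
  2 ≤ b ∧ b ≤ 12 ∧
  (ε₁ = 1 ∨ ε₁ = -1) ∧ (ε₂ = 1 ∨ ε₂ = -1) ∧
  1 ≤ d₁ ∧ d₁ ≤ 9 ∧ 1 ≤ d₂ ∧ d₂ ≤ 9 ∧
  1 ≤ l ∧ 1 ≤ m ∧ 1 ≤ n ∧
  (b + ε₁) * b ^ n + ε₂ = d₁ * (((10 : ℤ) ^ l - 1) / 9) - d₂ * (((10 : ℤ) ^ m - 1) / 9)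

open Finset

/-- The repunit with `k` decimal digits, in the form in which it occurs in `DiffSol10`. -/
def repunit (k : ℕ) : ℤ := ((10 : ℤ) ^ k - 1) / 9

theorem nine_mul_repunit (k : ℕ) : 9 * repunit k = 10 ^ k - 1 :=
  Int.mul_ediv_cancel' (by simpa using sub_dvd_pow_sub_pow (10 : ℤ) 1 k)

theorem repunit_succ (k : ℕ) : repunit (k + 1) = 10 * repunit k + 1 := by
  linarith [nine_mul_repunit k, nine_mul_repunit (k + 1), pow_succ (10 : ℤ) k]

theorem repunit_nonneg (k : ℕ) : 0 ≤ repunit k := by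
  linarith [nine_mul_repunit k, one_le_pow₀ (M₀ := ℤ) (a := 10) (n := k) (by norm_num)]

theorem repunit_strictMono : StrictMono repunit :=
  strictMono_nat_of_lt_succ fun k ↦ by linarith [repunit_succ k, repunit_nonneg k]

theorem repunit_pos {k : ℕ} (hk : 1 ≤ k) : 0 < repunit k :=
  (repunit_nonneg 0).trans_lt (repunit_strictMono hk)

theorem exists_pow_modEq_of_period {M a k p : ℕ} (hp : 0 < p)
    (hper : a ^ (k + p) ≡ a ^ k [MOD M]) {j n : ℕ} (hjk : j ≤ k) (hjn : j ≤ n) :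
    ∃ r ∈ Ico j (k + p), a ^ n ≡ a ^ r [MOD M] := by
  induction n using Nat.strong_induction_on with
  | _ n ih =>
    rcases lt_or_ge n (k + p) with hn | hn
    · exact ⟨n, mem_Ico.2 ⟨hjn, hn⟩, rfl⟩
    · obtain ⟨i, rfl⟩ := Nat.exists_eq_add_of_le hn
      obtain ⟨r, hr, hmod⟩ := ih (k + i) (by omega) (by omega)
      refine ⟨r, hr, Nat.ModEq.trans ?_ hmod⟩
      simpa only [pow_add] using hper.mul_right (a ^ i)

theorem mod_thousand_eq {y d l : ℕ} (hd : d ∈ Icc 1 9) (hl : 3 ≤ l)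
    (h : y + d ≡ d * 10 ^ l + 9 [MOD 1000]) : y % 1000 = 9 - d := by
  obtain ⟨k, rfl⟩ := Nat.exists_eq_add_of_le hl
  have hmod : (y + d) % 1000 = (1000 * (d * 10 ^ k) + 9) % 1000 := by
    rw [h]; congr 1; ring
  have hd' := mem_Icc.1 hd
  omega

/-- No digit `d` and no `l` with `5 ≤ l < t + 5` satisfy `y + d ≡ d * 10 ^ l + 9 [MOD M]`.
When `1000 ∣ M`, the congruence forces `d = 9 - y % 1000`, so only this digit is tested. -/
def AvoidsRepdigits (M t y : ℕ) : Prop :=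
  y % 1000 ≤ 8 →
    ∀ l ∈ Ico 5 (t + 5), ¬ y + (9 - y % 1000) ≡ (9 - y % 1000) * 10 ^ l + 9 [MOD M]

instance (M t y : ℕ) : Decidable (AvoidsRepdigits M t y) :=
  inferInstanceAs (Decidable (_ → _))

theorem AvoidsRepdigits.not_modEq {M t y d l : ℕ} (h : AvoidsRepdigits M t y)
    (hd : d ∈ Icc 1 9) (hl : l ∈ Ico 5 (t + 5)) (hy : y % 1000 = 9 - d) :
    ¬ y + d ≡ d * 10 ^ l + 9 [MOD M] := by
  obtain ⟨hd_pos, hd_le⟩ := mem_Icc.1 hd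
  have hdigit : 9 - y % 1000 = d := by omega
  simpa only [hdigit] using h (by omega) l hl

/-- `x + d₂ * (10 ^ m - 1)` avoids repdigits for all digits `d₂` and all `m` with `1 ≤ m < t + 5`.
The conditions on the residues of `x` follow from `(x + d₂ * (10 ^ m - 1)) % 1000 ≤ 8`; they are
tested first because they rule out most `x` for all `d₂` at once. -/
def PassesSieve (M t x : ℕ) : Prop :=
  (919 ≤ x % 1000 → ∀ d₂ ∈ Icc 1 9, AvoidsRepdigits M t (x + d₂ * 9)) ∧
  (x % 100 ≤ 17 → ∀ d₂ ∈ Icc 1 9, AvoidsRepdigits M t (x + d₂ * 99)) ∧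
  (x % 1000 ≤ 17 →
    ∀ m ∈ Ico 3 (t + 5), ∀ d₂ ∈ Icc 1 9, AvoidsRepdigits M t (x + d₂ * (10 ^ m - 1)))

instance (M t x : ℕ) : Decidable (PassesSieve M t x) :=
  inferInstanceAs (Decidable (_ ∧ _ ∧ _))

theorem PassesSieve.avoidsRepdigits {M t x d₂ m : ℕ} (h : PassesSieve M t x)
    (hd₂ : d₂ ∈ Icc 1 9) (hm : m ∈ Ico 1 (t + 5)) (hy : (x + d₂ * (10 ^ m - 1)) % 1000 ≤ 8) :
    AvoidsRepdigits M t (x + d₂ * (10 ^ m - 1)) := by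
  obtain ⟨h_one, h_two, h_three⟩ := h
  obtain ⟨hd₂_pos, hd₂_le⟩ := mem_Icc.1 hd₂
  obtain ⟨hm_pos, hm_lt⟩ := mem_Ico.1 hm
  obtain rfl | rfl | hm_ge : m = 1 ∨ m = 2 ∨ 3 ≤ m := by omega
  · exact h_one (by interval_cases d₂ <;> omega) d₂ hd₂
  · exact h_two (by interval_cases d₂ <;> omega) d₂ hd₂
  · refine h_three ?_ m (mem_Ico.2 ⟨hm_ge, hm_lt⟩) d₂ hd₂
    obtain ⟨k, rfl⟩ := Nat.exists_eq_add_of_le hm_ge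
    have hpow : x + d₂ * (10 ^ (3 + k) - 1) + d₂ = x + 1000 * (d₂ * 10 ^ k) := by
      zify [Nat.one_le_pow (3 + k) 10 (by norm_num)]
      ring
    omega

theorem PassesSieve.not_modEq {M t x d₁ d₂ l m : ℕ} (h : PassesSieve M t x) (hM : 1000 ∣ M)
    (hd₁ : d₁ ∈ Icc 1 9) (hd₂ : d₂ ∈ Icc 1 9) (hl : l ∈ Ico 5 (t + 5)) (hm : m ∈ Ico 1 (t + 5)) :
    ¬ x + d₂ * (10 ^ m - 1) + d₁ ≡ d₁ * 10 ^ l + 9 [MOD M] := by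
  intro hmod
  have hl_ge : 3 ≤ l := (by norm_num : 3 ≤ 5).trans (mem_Ico.1 hl).1
  have hy : (x + d₂ * (10 ^ m - 1)) % 1000 = 9 - d₁ :=
    mod_thousand_eq hd₁ hl_ge (hmod.of_dvd hM)
  have hy_le : (x + d₂ * (10 ^ m - 1)) % 1000 ≤ 8 := by
    have hd₁' := mem_Icc.1 hd₁
    omega
  exact (h.avoidsRepdigits hd₂ hm hy_le).not_modEq hd₁ hl hy hmod

/-- Modulo `M` the powers of `b` have period `p` and those of `10` have period `t`, both from the
exponent `5` on, and `9 * ((b ± 1) * b ^ n ± 1) + 9` passes the sieve for one period of `n`. Here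
`A` is `b ± 1`, and `c` is `± 1 + 1`, which keeps the expression within the natural numbers. -/
def IsSievingModulus (b M p t : ℕ) : Prop :=
  0 < p ∧ 0 < t ∧ 1000 ∣ M ∧ b ^ (5 + p) ≡ b ^ 5 [MOD M] ∧ 10 ^ (5 + t) ≡ 10 ^ 5 [MOD M] ∧
  ∀ A ∈ ({b - 1, b + 1} : Finset ℕ), ∀ c ∈ ({0, 2} : Finset ℕ), ∀ n ∈ range (p + 4),
    PassesSieve M t (9 * (A * b ^ (n + 1) + c))

instance (b M p t : ℕ) : Decidable (IsSievingModulus b M p t) :=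
  inferInstanceAs (Decidable (_ ∧ _ ∧ _ ∧ _ ∧ _ ∧ _))

theorem IsSievingModulus.length_le {b M p t A c d₁ d₂ l m n : ℕ} (h : IsSievingModulus b M p t)
    (hA : A ∈ ({b - 1, b + 1} : Finset ℕ)) (hc : c ∈ ({0, 2} : Finset ℕ))
    (hd₁ : d₁ ∈ Icc 1 9) (hd₂ : d₂ ∈ Icc 1 9) (hm : 1 ≤ m) (hn : 1 ≤ n)
    (heq : 9 * (A * b ^ n + c) + d₂ * (10 ^ m - 1) + d₁ = d₁ * 10 ^ l + 9) : l ≤ 4 := by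
  by_contra! hl
  obtain ⟨hp, ht, hM, hb, hten, hsieve⟩ := h
  obtain ⟨n', hn', hn_mod⟩ := exists_pow_modEq_of_period hp hb (by norm_num) hn
  obtain ⟨m', hm', hm_mod⟩ := exists_pow_modEq_of_period ht hten (by norm_num) hm
  obtain ⟨l', hl', hl_mod⟩ := exists_pow_modEq_of_period ht hten le_rfl (Nat.succ_le_of_lt hl)
  have hm_sub : 10 ^ m' - 1 ≡ 10 ^ m - 1 [MOD M] :=
    hm_mod.symm.sub (Nat.one_le_pow _ _ (by norm_num)) (Nat.one_le_pow _ _ (by norm_num)) rfl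
  have hpass : PassesSieve M t (9 * (A * b ^ n' + c)) := by
    obtain ⟨k, rfl⟩ := Nat.exists_eq_add_of_le' (mem_Ico.1 hn').1
    have hk := (mem_Ico.1 hn').2
    exact hsieve A hA c hc k (mem_range.2 (by omega))
  rw [add_comm 5 t] at hm' hl'
  refine hpass.not_modEq hM hd₁ hd₂ hl' hm' ?_
  calc 9 * (A * b ^ n' + c) + d₂ * (10 ^ m' - 1) + d₁
      ≡ 9 * (A * b ^ n + c) + d₂ * (10 ^ m - 1) + d₁ [MOD M] := by gcongr
    _ = d₁ * 10 ^ l + 9 := heq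
    _ ≡ d₁ * 10 ^ l' + 9 [MOD M] := by gcongr

-- Each modulus divides `10 ^ 5 * (10 ^ t - 1)`; among these numbers, those with a small period of
-- the powers of `b` were tried in turn.
set_option maxRecDepth 10000 in
theorem exists_isSievingModulus {b : ℕ} (hb : b ∈ Icc 2 12) :
    ∃ M p t, IsSievingModulus b M p t := by
  obtain ⟨hb_ge, hb_le⟩ := mem_Icc.1 hb
  interval_cases b
  · exact ⟨4000 * 1111, 100, 4, by decide +kernel⟩
  · exact ⟨2000 * 1111, 100, 4, by decide +kernel⟩
  · exact ⟨2000 * 1111, 50, 4, by decide +kernel⟩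
  · exact ⟨1000 * 13, 4, 6, by decide +kernel⟩
  · exact ⟨1000 * 1111, 50, 4, by decide +kernel⟩
  · exact ⟨1000 * 77, 20, 6, by decide +kernel⟩
  · exact ⟨2000 * 9191, 100, 12, by decide +kernel⟩
  · exact ⟨5000 * 1111, 250, 4, by decide +kernel⟩
  · exact ⟨25000 * 11, 2, 2, by decide +kernel⟩
  · exact ⟨10000 * 1111, 500, 4, by decide +kernel⟩
  · exact ⟨1000 * 1111, 100, 4, by decide +kernel⟩

namespace DiffSol10

variable {b ε₁ ε₂ d₁ d₂ : ℤ} {l m n : ℕ}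

theorem eq_repunit_sub (h : DiffSol10 b ε₁ ε₂ d₁ d₂ l m n) :
    (b + ε₁) * b ^ n + ε₂ = d₁ * repunit l - d₂ * repunit m :=
  h.2.2.2.2.2.2.2.2.2.2.2

theorem base_pow_le (h : DiffSol10 b ε₁ ε₂ d₁ d₂ l m n) : b ^ n ≤ (b + ε₁) * b ^ n := by
  obtain ⟨hb, -, hε₁, -⟩ := h
  exact le_mul_of_one_le_left (by positivity) (by rcases hε₁ with rfl | rfl <;> linarith)

theorem left_pos (h : DiffSol10 b ε₁ ε₂ d₁ d₂ l m n) : 0 < (b + ε₁) * b ^ n + ε₂ := by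
  have hpow := h.base_pow_le
  obtain ⟨hb, -, -, hε₂, -, -, -, -, -, -, hn, -⟩ := h
  have hbn : b ≤ b ^ n := le_self_pow₀ (by linarith) (by omega)
  rcases hε₂ with rfl | rfl <;> linarith

theorem le_length (h : DiffSol10 b ε₁ ε₂ d₁ d₂ l m n) : m ≤ l := by
  have hpos := h.left_pos
  have heq := h.eq_repunit_sub
  obtain ⟨-, -, -, -, -, hd₁, hd₂, -⟩ := h
  have hl : 0 ≤ repunit l := repunit_nonneg l
  have hd₁_mul : d₁ * repunit l ≤ 9 * repunit l := by gcongr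
  have hd₂_mul : repunit m ≤ d₂ * repunit m := le_mul_of_one_le_left (repunit_nonneg m) hd₂
  have hlt : repunit m < repunit (l + 1) := by linarith [repunit_succ l]
  exact Nat.lt_succ_iff.1 (repunit_strictMono.lt_iff_lt.1 hlt)

theorem length_le (h : DiffSol10 b ε₁ ε₂ d₁ d₂ l m n) : l ≤ 4 := by
  have heq := h.eq_repunit_sub
  obtain ⟨hb, hb', hε₁, hε₂, hd₁, hd₁', hd₂, hd₂', -, hm, hn, -⟩ := h
  lift b to ℕ using by linarith
  lift d₁ to ℕ using by linarith
  lift d₂ to ℕ using by linarith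
  obtain ⟨A, hA, hAε₁⟩ : ∃ A ∈ ({b - 1, b + 1} : Finset ℕ), (A : ℤ) = b + ε₁ := by
    rcases hε₁ with rfl | rfl
    · exact ⟨b + 1, by simp, by simp⟩
    · exact ⟨b - 1, by simp, by omega⟩
  obtain ⟨c, hc, hcε₂⟩ : ∃ c ∈ ({0, 2} : Finset ℕ), (c : ℤ) = ε₂ + 1 := by
    rcases hε₂ with rfl | rfl <;> simp
  obtain ⟨M, p, t, hM⟩ := exists_isSievingModulus (b := b) (mem_Icc.2 (by omega))
  have hd₁_mem : d₁ ∈ Icc 1 9 := mem_Icc.2 (by omega)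
  have hd₂_mem : d₂ ∈ Icc 1 9 := mem_Icc.2 (by omega)
  refine hM.length_le hA hc hd₁_mem hd₂_mem hm hn ?_
  zify [Nat.one_le_pow m 10 (by norm_num)]
  rw [hAε₁, hcε₂]
  linear_combination 9 * heq + d₁ * nine_mul_repunit l - d₂ * nine_mul_repunit m

theorem base_pow_le_ten_pow (h : DiffSol10 b ε₁ ε₂ d₁ d₂ l m n) : b ^ n ≤ 10 ^ 4 := by
  have hpow := h.base_pow_le
  have heq := h.eq_repunit_sub
  have hl_le : repunit l ≤ 1111 := repunit_strictMono.monotone h.length_le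
  obtain ⟨-, -, -, hε₂, -, hd₁', hd₂, -, -, hm, -⟩ := h
  have hd₁_mul : d₁ * repunit l ≤ 9 * 1111 :=
    mul_le_mul hd₁' hl_le (repunit_nonneg l) (by norm_num)
  have hd₂_mul : 0 < d₂ * repunit m := mul_pos (by linarith) (repunit_pos hm)
  rcases hε₂ with rfl | rfl <;> linarith

theorem exponent_le_thirteen (h : DiffSol10 b ε₁ ε₂ d₁ d₂ l m n) : n ≤ 13 := by
  have hb : 2 ≤ b := h.1
  have hlt : (2 : ℤ) ^ n < 2 ^ 14 :=
    calc (2 : ℤ) ^ n ≤ b ^ n := by gcongr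
      _ ≤ 10 ^ 4 := h.base_pow_le_ten_pow
      _ < 2 ^ 14 := by norm_num
  exact Nat.lt_succ_iff.1 ((pow_lt_pow_iff_right₀ (by norm_num)).1 hlt)

end DiffSol10

/-- The data `((b, n), ε₁, ε₂, (l, m), d₂)` of a candidate solution without the digit `d₁`, which
they determine. -/
abbrev PartialSolution := (ℤ × ℕ) × ℤ × ℤ × (ℕ × ℕ) × ℤ

namespace PartialSolution

variable {b ε₁ ε₂ d₂ : ℤ} {l m n : ℕ}

/-- The value that `d₁ * repunit l` must take. -/
def dividend : PartialSolution → ℤ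
  | ((b, n), ε₁, ε₂, (_, m), d₂) => (b + ε₁) * b ^ n + ε₂ + d₂ * repunit m

/-- The only possible value of `d₁`, provided that the division is exact. -/
def digit (x : PartialSolution) : ℤ := x.dividend / repunit x.2.2.2.1.1

/-- Some digit `d₁` satisfies `d₁ * repunit l = dividend`. -/
def IsCompletable (x : PartialSolution) : Prop :=
  repunit x.2.2.2.1.1 ∣ x.dividend ∧ 1 ≤ x.digit ∧ x.digit ≤ 9

instance (x : PartialSolution) : Decidable x.IsCompletable :=
  inferInstanceAs (Decidable (_ ∧ _ ∧ _))

/-- The tuple `(b, ε₁, ε₂, d₁, d₂, l, m, n)` obtained by inserting `d₁ = digit`. -/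
def complete (x : PartialSolution) : ℤ × ℤ × ℤ × ℤ × ℤ × ℕ × ℕ × ℕ :=
  match x with
  | ((b, n), ε₁, ε₂, (l, m), d₂) => (b, ε₁, ε₂, x.digit, d₂, l, m, n)

theorem complete_injective : Function.Injective complete := by
  rintro ⟨⟨b, n⟩, ε₁, ε₂, ⟨l, m⟩, d₂⟩ ⟨⟨b', n'⟩, ε₁', ε₂', ⟨l', m'⟩, d₂'⟩ h
  simp only [complete, Prod.mk.injEq] at h ⊢
  tauto

/-- The pairs `(b, n)` with `b ^ n ≤ 10 ^ 4`. The definition is irreducible because elaboration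
would otherwise unfold membership in `candidates` to a disjunction over all elements. -/
@[irreducible]
noncomputable def smallPowers : Finset (ℤ × ℕ) :=
  {x ∈ Icc 2 12 ×ˢ Icc 1 13 | x.1 ^ x.2 ≤ 10 ^ 4}

/-- The range of `ε₁` and of `ε₂`. -/
def signs : Finset ℤ := {1, -1}

/-- The pairs `(l, m)` with `1 ≤ m ≤ l ≤ 4`. -/
def lengths : Finset (ℕ × ℕ) := {x ∈ Icc 1 4 ×ˢ Icc 1 4 | x.2 ≤ x.1}

/-- A finite set containing the data of every solution. -/
noncomputable def candidates : Finset PartialSolution :=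
  smallPowers ×ˢ signs ×ˢ signs ×ˢ lengths ×ˢ Icc 1 9

theorem mem_candidates : ((b, n), ε₁, ε₂, (l, m), d₂) ∈ candidates ↔
    ((2 ≤ b ∧ b ≤ 12) ∧ (1 ≤ n ∧ n ≤ 13) ∧ b ^ n ≤ 10 ^ 4) ∧ (ε₁ = 1 ∨ ε₁ = -1) ∧
    (ε₂ = 1 ∨ ε₂ = -1) ∧ ((1 ≤ l ∧ l ≤ 4) ∧ (1 ≤ m ∧ m ≤ 4) ∧ m ≤ l) ∧ 1 ≤ d₂ ∧ d₂ ≤ 9 := by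
  simp only [candidates, smallPowers, signs, lengths, mem_product, mem_filter, mem_Icc,
    mem_insert, mem_singleton, and_assoc]

set_option maxRecDepth 10000 in
theorem card_completable : #{x ∈ candidates | IsCompletable x} = 160 := by
  decide +kernel

set_option maxRecDepth 10000 in
theorem IsCompletable.exponent_le {x : PartialSolution} (h : x.IsCompletable)
    (hx : x ∈ candidates) : x.1.2 ≤ 10 := by
  have hlarge : ∀ p ∈ smallPowers, 10 < p.2 →
      ∀ y ∈ signs ×ˢ signs ×ˢ lengths ×ˢ Icc (1 : ℤ) 9, ¬ IsCompletable (p, y) := by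
    decide +kernel
  obtain ⟨hp, hy⟩ := mem_product.1 hx
  by_contra! hn
  exact hlarge x.1 hp hn x.2 hy h

theorem IsCompletable.diffSol10 (h : IsCompletable ((b, n), ε₁, ε₂, (l, m), d₂))
    (hx : ((b, n), ε₁, ε₂, (l, m), d₂) ∈ candidates) :
    DiffSol10 b ε₁ ε₂ (digit ((b, n), ε₁, ε₂, (l, m), d₂)) d₂ l m n := by
  obtain ⟨hdvd, hd₁, hd₁'⟩ := h
  have heq : (b + ε₁) * b ^ n + ε₂ =
      digit ((b, n), ε₁, ε₂, (l, m), d₂) * repunit l - d₂ * repunit m :=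
    eq_sub_of_add_eq (Int.ediv_mul_cancel hdvd).symm
  obtain ⟨⟨⟨hb, hb'⟩, ⟨hn, -⟩, -⟩, hε₁, hε₂, ⟨⟨hl, -⟩, ⟨hm, -⟩, -⟩, hd₂, hd₂'⟩ :=
    mem_candidates.1 hx
  exact ⟨hb, hb', hε₁, hε₂, hd₁, hd₁', hd₂, hd₂', hl, hm, hn, heq⟩

end PartialSolution

namespace DiffSol10

open PartialSolution

variable {b ε₁ ε₂ d₁ d₂ : ℤ} {l m n : ℕ}

theorem mem_candidates (h : DiffSol10 b ε₁ ε₂ d₁ d₂ l m n) :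
    ((b, n), ε₁, ε₂, (l, m), d₂) ∈ candidates := by
  have hml := h.le_length
  have hl' := h.length_le
  have hpow := h.base_pow_le_ten_pow
  have hn' := h.exponent_le_thirteen
  obtain ⟨hb, hb', hε₁, hε₂, -, -, hd₂, hd₂', hl, hm, hn, -⟩ := h
  exact PartialSolution.mem_candidates.2 ⟨⟨⟨hb, hb'⟩, ⟨hn, hn'⟩, hpow⟩, hε₁, hε₂,
    ⟨⟨hl, hl'⟩, ⟨hm, hml.trans hl'⟩, hml⟩, hd₂, hd₂'⟩

theorem dividend_eq (h : DiffSol10 b ε₁ ε₂ d₁ d₂ l m n) :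
    dividend ((b, n), ε₁, ε₂, (l, m), d₂) = d₁ * repunit l := by
  simp only [dividend, h.eq_repunit_sub, sub_add_cancel]

theorem digit_eq (h : DiffSol10 b ε₁ ε₂ d₁ d₂ l m n) :
    digit ((b, n), ε₁, ε₂, (l, m), d₂) = d₁ := by
  have hdiv := h.dividend_eq
  obtain ⟨-, -, -, -, -, -, -, -, hl, -⟩ := h
  rw [digit, hdiv, Int.mul_ediv_cancel _ (repunit_pos hl).ne']

theorem isCompletable (h : DiffSol10 b ε₁ ε₂ d₁ d₂ l m n) :
    IsCompletable ((b, n), ε₁, ε₂, (l, m), d₂) := by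
  have hdvd : repunit l ∣ dividend ((b, n), ε₁, ε₂, (l, m), d₂) :=
    h.dividend_eq ▸ dvd_mul_left _ _
  have hdigit := h.digit_eq
  obtain ⟨-, -, -, -, hd₁, hd₁', -⟩ := h
  exact ⟨hdvd, hdigit.symm ▸ hd₁, hdigit.symm ▸ hd₁'⟩

end DiffSol10

theorem PartialSolution.image_complete :
    complete '' ({x ∈ candidates | IsCompletable x} : Finset PartialSolution) =
      {x : ℤ × ℤ × ℤ × ℤ × ℤ × ℕ × ℕ × ℕ |
        DiffSol10 x.1 x.2.1 x.2.2.1 x.2.2.2.1 x.2.2.2.2.1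
          x.2.2.2.2.2.1 x.2.2.2.2.2.2.1 x.2.2.2.2.2.2.2} := by
  refine Set.Subset.antisymm ?_ ?_
  · rintro _ ⟨⟨⟨b, n⟩, ε₁, ε₂, ⟨l, m⟩, d₂⟩, hx, rfl⟩
    obtain ⟨hmem, hcompl⟩ := mem_filter.1 hx
    exact hcompl.diffSol10 hmem
  · rintro ⟨b, ε₁, ε₂, d₁, d₂, l, m, n⟩ h
    exact ⟨_, mem_filter.2 ⟨h.mem_candidates, h.isCompletable⟩,
      by simp only [complete, DiffSol10.digit_eq h]⟩

/-- For `g = 10` and `2 ≤ b ≤ 12`: the equations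
`(b ± 1)·b^n ± 1 = d₁·(10^l−1)/9 − d₂·(10^m−1)/9` have exactly `160` solutions
with `n ≥ 1`; in all of them `m ≤ l ≤ 4` and `n ≤ 10`. One instance is
`(2−1)·2^9 − 1 = 5·(10³−1)/9 − 4·(10²−1)/9`. -/
theorem stmt_19 :
    {x : ℤ × ℤ × ℤ × ℤ × ℤ × ℕ × ℕ × ℕ |
        DiffSol10 x.1 x.2.1 x.2.2.1 x.2.2.2.1 x.2.2.2.2.1
          x.2.2.2.2.2.1 x.2.2.2.2.2.2.1 x.2.2.2.2.2.2.2}.ncard = 160 ∧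
    (∀ (b ε₁ ε₂ d₁ d₂ : ℤ) (l m n : ℕ),
      DiffSol10 b ε₁ ε₂ d₁ d₂ l m n → m ≤ l ∧ l ≤ 4 ∧ n ≤ 10) ∧
    ((2 : ℤ) - 1) * 2 ^ 9 - 1 =
      5 * (((10 : ℤ) ^ 3 - 1) / 9) - 4 * (((10 : ℤ) ^ 2 - 1) / 9) := by
  refine ⟨?_, fun b ε₁ ε₂ d₁ d₂ l m n h ↦
    ⟨h.le_length, h.length_le, h.isCompletable.exponent_le h.mem_candidates⟩, by norm_num⟩
  rw [← PartialSolution.image_complete,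
    Set.ncard_image_of_injective _ PartialSolution.complete_injective, Set.ncard_coe_finset,
    PartialSolution.card_completable]
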